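/- Let C be a small category and c an object of C such that for every object d of C the binary product d ⨯ c exists in C. Then the exponentiation-by-y(c) functor on the presheaf category Cᵒᵖ ⥤ Type, namely the internal hom functor ihom (yoneda.obj c) : (Cᵒᵖ ⥤ Type) ⥤ (Cᵒᵖ ⥤ Type) sending X to the exponential X^{yoneda.obj c}, has a right adjoint (i.e., it is a left adjoint). In other words, the representable presheaf yoneda.obj c is an internally tiny object of the presheaf category. -/

import Mathlib

/-!
A map `y(d) ⟶ X ^ y(c)` of presheaves is an element of `X (d ⨯ c)`, since `y(d) ⨯ y(c) ≅ y(d ⨯ c)`.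
So exponentiation by `y(c)` is precomposition with the endofunctor `d ↦ d ⨯ c` of `C`, whose right
adjoint is right Kan extension along that endofunctor.
-/

open CategoryTheory Limits MonoidalCategory

universe w v v' v'' u u' u''

theorem isLeftAdjoint_whiskeringLeft_obj {C : Type u} [Category.{v} C] [EssentiallySmall.{w} C]
    {D : Type u'} [Category.{v'} D] [LocallySmall.{w} D]
    (H : Type u'') [Category.{v''} H] [HasLimitsOfSize.{w, w} H] (F : C ⥤ D) :
    ((Functor.whiskeringLeft C D H).obj F).IsLeftAdjoint := by
  have (d : D) : HasLimitsOfShape (StructuredArrow d F) H :=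
    hasLimitsOfShape_of_essentiallySmall.{w} _ _
  exact (F.ranAdjunction H).isLeftAdjoint

section ProdRight

variable {C : Type u} [Category.{v} C] (c : C) [∀ d : C, HasBinaryProduct d c]

/-- The functor `d ↦ d ⨯ c`, for a fixed object `c` all of whose products `d ⨯ c` exist. Unlike
`prod.functor`, it does not require the other binary products of `C`. -/
noncomputable def prodRightFunctor : C ⥤ C where
  obj d := d ⨯ c
  map f := prod.map f (𝟙 c)

/-- Precomposition of presheaves with `d ↦ d ⨯ c`. -/
noncomputable abbrev precompProdRight : (Cᵒᵖ ⥤ Type v) ⥤ (Cᵒᵖ ⥤ Type v) :=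
  (Functor.whiskeringLeft Cᵒᵖ Cᵒᵖ (Type v)).obj (prodRightFunctor c).op

/-- The unit of `tensorLeftYonedaAdjunction`: it pairs the restriction of `x : X d` along the first
projection of `d ⨯ c` with the second projection. -/
noncomputable def tensorLeftYonedaUnit :
    𝟭 (Cᵒᵖ ⥤ Type v) ⟶ tensorLeft (yoneda.obj c) ⋙ precompProdRight c where
  app X :=
    { app d := ↾fun x ↦ ((prod.snd : d.unop ⨯ c ⟶ c), X.map prod.fst.op x)
      naturality := by
        rintro ⟨d⟩ ⟨e⟩ ⟨f : e ⟶ d⟩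
        have map_fst : X.map f.op ≫ X.map (prod.fst : e ⨯ c ⟶ e).op =
            X.map prod.fst.op ≫ X.map (prod.map f (𝟙 c)).op := by
          rw [← Functor.map_comp, ← Functor.map_comp, ← op_comp, ← op_comp, prod.map_fst]
        have map_snd : (prod.snd : e ⨯ c ⟶ c) = prod.map f (𝟙 c) ≫ prod.snd := by simp
        ext x
        have map_fst_apply := ConcreteCategory.congr_hom map_fst x
        exact Prod.ext map_snd map_fst_apply }
  naturality X Y f := by
    ext ⟨d⟩ x
    have naturality_fst := NatTrans.naturality_apply f (prod.fst : d ⨯ c ⟶ d).op x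
    exact Prod.ext rfl naturality_fst.symm

/-- The counit of `tensorLeftYonedaAdjunction`: it restricts an element of `X (d ⨯ c)` along the
graph `d ⟶ d ⨯ c` of a morphism `g : d ⟶ c`. -/
noncomputable def tensorLeftYonedaCounit :
    precompProdRight c ⋙ tensorLeft (yoneda.obj c) ⟶ 𝟭 (Cᵒᵖ ⥤ Type v) where
  app X :=
    { app d := ↾fun p ↦ X.map (prod.lift (𝟙 d.unop) p.1).op p.2
      naturality := by
        rintro ⟨d⟩ ⟨e⟩ ⟨f : e ⟶ d⟩
        ext ⟨g : d ⟶ c, x⟩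
        have map_graph :
            X.map (prod.map f (𝟙 c)).op ≫ X.map (prod.lift (𝟙 e) (f ≫ g)).op =
              X.map (prod.lift (𝟙 d) g).op ≫ X.map f.op := by
          simp only [← Functor.map_comp, ← op_comp, prod.lift_map, prod.comp_lift,
            Category.id_comp, Category.comp_id]
        exact ConcreteCategory.congr_hom map_graph x }
  naturality X Y f := by
    ext d ⟨g, x⟩
    exact (NatTrans.naturality_apply f (prod.lift (𝟙 d.unop) g).op x).symm

/-- If all products `d ⨯ c` exist, the product functor with `yoneda.obj c` on presheaves is left
adjoint to precomposition with `d ↦ d ⨯ c`. -/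
noncomputable def tensorLeftYonedaAdjunction :
    tensorLeft (yoneda.obj c) ⊣ precompProdRight c where
  unit := tensorLeftYonedaUnit c
  counit := tensorLeftYonedaCounit c
  left_triangle_components X := by
    ext ⟨d⟩ ⟨g : d ⟶ c, x⟩
    have graph_fst : X.map prod.fst.op ≫ X.map (prod.lift (𝟙 d) g).op = 𝟙 _ := by
      rw [← Functor.map_comp, ← op_comp, prod.lift_fst, op_id, X.map_id]
    have graph_fst_apply := ConcreteCategory.congr_hom graph_fst x
    exact Prod.ext (prod.lift_snd _ g) graph_fst_apply
  right_triangle_components X := by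
    ext ⟨d⟩ x
    have graph_snd : X.map (prod.map (prod.fst : d ⨯ c ⟶ d) (𝟙 c)).op ≫
        X.map (prod.lift (𝟙 (d ⨯ c)) prod.snd).op = 𝟙 _ := by
      rw [← Functor.map_comp, ← op_comp, prod.lift_map, Category.id_comp, Category.comp_id,
        prod.lift_fst_snd, op_id, X.map_id]
    exact ConcreteCategory.congr_hom graph_snd x

/-- The exponential `X ^ yoneda.obj c` is the presheaf `d ↦ X (d ⨯ c)`, naturally in `X`. -/
noncomputable def ihomYonedaIso [Closed (yoneda.obj c)] :
    ihom (yoneda.obj c) ≅ precompProdRight c :=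
  (ihom.adjunction (yoneda.obj c)).rightAdjointUniq (tensorLeftYonedaAdjunction c)

theorem yoneda_obj_tiny_of_hasBinaryProducts_general [EssentiallySmall.{v} C]
    [Closed (yoneda.obj c)] : (ihom (yoneda.obj c)).IsLeftAdjoint :=
  have := isLeftAdjoint_whiskeringLeft_obj.{v} (Type v) (prodRightFunctor c).op
  Functor.isLeftAdjoint_of_iso (ihomYonedaIso c).symm

end ProdRight

/-- If `c` is an object of a small category `C` such that all binary products `d ⨯ c`
exist in `C`, then the representable presheaf `yoneda.obj c` is internally tiny: the
exponentiation functor `ihom (yoneda.obj c)` on presheaves has a right adjoint. -/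
theorem yoneda_obj_tiny_of_hasBinaryProducts
    {C : Type u} [SmallCategory C] (c : C)
    (hprod : ∀ d : C, HasBinaryProduct d c) :
    (ihom (yoneda.obj c) : (Cᵒᵖ ⥤ Type u) ⥤ (Cᵒᵖ ⥤ Type u)).IsLeftAdjoint :=
  yoneda_obj_tiny_of_hasBinaryProducts_general c
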